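/- Let M∞ be a symmetric 4×4 complex matrix, U ⊆ ℂ open, and A : U → GL₄(ℂ) holomorphic with A(λ)ᵀ·(M₀ − λ·M∞)·A(λ) = M₀ for all λ ∈ U. Define Φ(x,y,λ) := A(λ)·(x, y, xy, 1)ᵀ ∈ ℂ⁴. Then at every point (x,y,λ) ∈ ℂ² × U with Φ₄(x,y,λ) ≠ 0, the determinant of the 3×3 complex Jacobian matrix of the map (x,y,λ) ↦ (Φ₁/Φ₄, Φ₂/Φ₄, Φ₃/Φ₄) equals −½ · det(A(λ)) · Φ₄⁻⁴ · Φᵀ·M∞·Φ. -/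

import Mathlib

/-!
Write `v = (x, y, xy, 1)ᵀ`, `p = Φ = A v`, and let `p'` be the `λ`-derivative of `p`.

* In homogeneous coordinates the Jacobian determinant of an affine chart is
  `p₄⁻⁴ det[p_x, p_y, p', p]` (`det_chart`).
* With `w = A⁻¹ p'`, the four columns are `A` applied to `v_x, v_y, w, v`, so this determinant is
  `det A · det[v_x, v_y, w, v]`. The vectors `v_x, v_y, v` span the tangent space of the quadric
  `Q₀ = 0` at `v`, whence `det[v_x, v_y, w, v] = -vᵀ M₀ w` (`det_tangent`).
* By the normalization, `vᵀ M₀ w = pᵀ (M₀ - λ M∞) p'`. Differentiating the constant function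
  `pᵀ (M₀ - λ M∞) p = vᵀ M₀ v` in `λ` and using symmetry gives
  `2 pᵀ (M₀ - λ M∞) p' = pᵀ M∞ p` (`two_mul_pencil`).
-/

open Matrix

/-- `M₀` is the symmetric matrix of the quadratic form `Q₀(X) = X₁X₂ - X₃X₄`. -/
def M0 : Matrix (Fin 4) (Fin 4) ℂ := !![0, 1, 0, 0; 1, 0, 0, 0; 0, 0, 0, -1; 0, 0, -1, 0]

/-- The Jacobian determinant of the affine chart `(p₁/p₄, p₂/p₄, p₃/p₄)`, whose entries are given
by the quotient rule, as a `4 × 4` determinant in homogeneous coordinates. -/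
lemma det_chart (p a b c : Fin 4 → ℂ) (h : p 3 ≠ 0) :
    Matrix.det (Matrix.of fun (i : Fin 3) (j : Fin 3) =>
        ![(a i.castSucc * p 3 - p i.castSucc * a 3) / p 3 ^ 2,
          (b i.castSucc * p 3 - p i.castSucc * b 3) / p 3 ^ 2,
          (c i.castSucc * p 3 - p i.castSucc * c 3) / p 3 ^ 2] j)
      = (p 3)⁻¹ ^ 4 * Matrix.det (Matrix.of fun i j => ![a i, b i, c i, p i] j) := by
  have e0 : (Fin.castSucc (0 : Fin 3)) = (0 : Fin 4) := rfl
  have e1 : (Fin.castSucc (1 : Fin 3)) = (1 : Fin 4) := rfl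
  have e2 : (Fin.castSucc (2 : Fin 3)) = (2 : Fin 4) := rfl
  have s2 : (Fin.succ (2 : Fin 3)) = (3 : Fin 4) := rfl
  have s1 : (Fin.succ (1 : Fin 3)) = (2 : Fin 4) := rfl
  rw [Matrix.det_succ_row_zero (Matrix.of fun i j => ![a i, b i, c i, p i] j :
    Matrix (Fin 4) (Fin 4) ℂ), Fin.sum_univ_four]
  simp [Matrix.det_fin_three, Matrix.submatrix, Fin.succAbove, e0, e1, e2, s1, s2, Fin.lt_def]
  field_simp
  ring

/-- The vectors `(1,0,y,0)`, `(0,1,x,0)`, `(x,y,xy,1)` span the tangent hyperplane of `Q₀ = 0` at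
the last of them, so that the determinant is proportional to the polar form of `Q₀`. -/
lemma det_tangent (x y : ℂ) (w : Fin 4 → ℂ) :
    Matrix.det (Matrix.of fun i j =>
        ![(![1, 0, y, 0] : Fin 4 → ℂ) i, (![0, 1, x, 0] : Fin 4 → ℂ) i, w i,
          (![x, y, x * y, 1] : Fin 4 → ℂ) i] j)
      = -(![x, y, x * y, 1] ⬝ᵥ (M0 *ᵥ w)) := by
  have s2 : (Fin.succ (2 : Fin 3)) = (3 : Fin 4) := rfl
  have s1 : (Fin.succ (1 : Fin 3)) = (2 : Fin 4) := rfl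
  rw [Matrix.det_succ_row_zero, Fin.sum_univ_four]
  simp [Matrix.det_fin_three, Matrix.submatrix, Fin.succAbove, s1, s2, Fin.lt_def, M0,
    dotProduct, Matrix.mulVec, Fin.sum_univ_four]
  ring

lemma M0_isSymm : M0.IsSymm := by
  ext i j
  fin_cases i <;> fin_cases j <;> simp [M0]

/-- If the value of the pencil of quadratic forms `M₀ - tM∞` along a curve `p(t)` is locally
constant, then `2 pᵀ (M₀ - lM∞) p' = pᵀ M∞ p`. -/
lemma two_mul_pencil (Minf : Matrix (Fin 4) (Fin 4) ℂ) (hM : Minf.IsSymm) (p : ℂ → Fin 4 → ℂ)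
    (p' : Fin 4 → ℂ) (l k : ℂ) (hp : ∀ i, HasDerivAt (fun t => p t i) (p' i) l)
    (hk : ∀ᶠ t in nhds l, p t ⬝ᵥ ((M0 - t • Minf) *ᵥ p t) = k) :
    2 * (p l ⬝ᵥ ((M0 - l • Minf) *ᵥ p')) = p l ⬝ᵥ (Minf *ᵥ p l) := by
  have hd : HasDerivAt (fun t => p t ⬝ᵥ ((M0 - t • Minf) *ᵥ p t))
      (p' ⬝ᵥ ((M0 - l • Minf) *ᵥ p l) + p l ⬝ᵥ ((M0 - l • Minf) *ᵥ p')
        - p l ⬝ᵥ (Minf *ᵥ p l)) l := by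
    have hs : HasDerivAt (fun t => ∑ i, p t i * ∑ j, (M0 i j - t * Minf i j) * p t j)
        (∑ i, (p' i * (∑ j, (M0 i j - l * Minf i j) * p l j) +
          p l i * ∑ j, ((-(1 * Minf i j)) * p l j + (M0 i j - l * Minf i j) * p' j))) l :=
      HasDerivAt.fun_sum fun i _ => (hp i).mul <| HasDerivAt.fun_sum fun j _ =>
        (((hasDerivAt_id l).mul_const (Minf i j)).const_sub (M0 i j)).mul (hp j)
    refine HasDerivAt.congr_deriv (f := fun t => p t ⬝ᵥ ((M0 - t • Minf) *ᵥ p t)) hs ?_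
    simp only [dotProduct, Matrix.mulVec, Fin.sum_univ_four, Matrix.sub_apply, Matrix.smul_apply,
      smul_eq_mul]
    ring
  have h0 := hd.unique ((hasDerivAt_const l k).congr_of_eventuallyEq hk)
  have hsymm : (M0 - l • Minf)ᵀ = M0 - l • Minf := by
    rw [Matrix.transpose_sub, Matrix.transpose_smul, hM.eq, M0_isSymm.eq]
  have hc : p' ⬝ᵥ ((M0 - l • Minf) *ᵥ p l) = p l ⬝ᵥ ((M0 - l • Minf) *ᵥ p') := by
    rw [Matrix.dotProduct_mulVec, ← Matrix.mulVec_transpose, hsymm, dotProduct_comm]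
  rw [hc] at h0
  linear_combination h0

/-- Proposition 3 of the paper with explicit constant: for the pencil-adapted coordinates
`Φ(x,y,λ) = A(λ)·(x,y,xy,1)ᵀ` of a normalizing holomorphic family `A(λ)` of the pencil
`M_λ = M₀ − λM∞`, at every point with `Φ₄ ≠ 0` the Jacobian determinant of
`(x,y,λ) ↦ (Φ₁/Φ₄, Φ₂/Φ₄, Φ₃/Φ₄)` equals `−½·det A(λ)·Φ₄⁻⁴·Φᵀ·M∞·Φ`. -/
theorem stmt4 (Minf : Matrix (Fin 4) (Fin 4) ℂ) (hMsymm : Minf.IsSymm)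
    (U : Set ℂ) (hU : IsOpen U)
    (A : ℂ → Matrix (Fin 4) (Fin 4) ℂ)
    (hAhol : ∀ i j, DifferentiableOn ℂ (fun l => A l i j) U)
    (hAinv : ∀ l ∈ U, IsUnit (A l).det)
    (hAnorm : ∀ l ∈ U, (A l)ᵀ * (M0 - l • Minf) * A l = M0)
    (Φ : ℂ → ℂ → ℂ → Fin 4 → ℂ)
    (hΦ : ∀ x y l, Φ x y l = A l *ᵥ ![x, y, x * y, 1]) :
    ∀ (x y : ℂ), ∀ l ∈ U, Φ x y l 3 ≠ 0 →
      Matrix.det (Matrix.of fun (i : Fin 3) (j : Fin 3) =>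
          ![deriv (fun t => Φ t y l i.castSucc / Φ t y l 3) x,
            deriv (fun t => Φ x t l i.castSucc / Φ x t l 3) y,
            deriv (fun t => Φ x y t i.castSucc / Φ x y t 3) l] j)
        = -(1 / 2) * (A l).det * ((Φ x y l 3)⁻¹) ^ 4 * (Φ x y l ⬝ᵥ (Minf *ᵥ Φ x y l)) := by
  intro x y l hl h3
  set v : Fin 4 → ℂ := ![x, y, x * y, 1] with hv
  have hUl : U ∈ nhds l := hU.mem_nhds hl
  have hform : ∀ t ∈ U, ∀ u w : Fin 4 → ℂ,
      (A t *ᵥ u) ⬝ᵥ ((M0 - t • Minf) *ᵥ (A t *ᵥ w)) = u ⬝ᵥ (M0 *ᵥ w) := by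
    intro t ht u w
    conv_rhs => rw [← hAnorm t ht]
    rw [← Matrix.mulVec_mulVec, ← Matrix.mulVec_mulVec,
      Matrix.dotProduct_mulVec u, Matrix.vecMul_transpose]
  have hdx : ∀ i, HasDerivAt (fun t => Φ t y l i) ((A l *ᵥ ![1, 0, y, 0]) i) x := by
    intro i
    have h := (((hasDerivAt_id x).const_mul (A l i 0)).add_const (A l i 1 * y)).add
      ((((hasDerivAt_id x).mul_const y).const_mul (A l i 2)).add_const (A l i 3))
    refine (h.congr_deriv ?_).congr_of_eventuallyEq (.of_forall fun t => ?_)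
    · simp [Matrix.mulVec, dotProduct, Fin.sum_univ_four]
    · simp [hΦ, Matrix.mulVec, dotProduct, Fin.sum_univ_four]
      ring
  have hdy : ∀ i, HasDerivAt (fun t => Φ x t l i) ((A l *ᵥ ![0, 1, x, 0]) i) y := by
    intro i
    have h := (((hasDerivAt_id y).const_mul (A l i 1)).add_const (A l i 0 * x)).add
      ((((hasDerivAt_id y).const_mul x).const_mul (A l i 2)).add_const (A l i 3))
    refine (h.congr_deriv ?_).congr_of_eventuallyEq (.of_forall fun t => ?_)
    · simp [Matrix.mulVec, dotProduct, Fin.sum_univ_four]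
    · simp [hΦ, Matrix.mulVec, dotProduct, Fin.sum_univ_four]
      ring
  obtain ⟨p', hdl⟩ : ∃ p' : Fin 4 → ℂ, ∀ i, HasDerivAt (fun t => Φ x y t i) (p' i) l := by
    refine ⟨fun i => ∑ j, deriv (fun t => A t i j) l * v j, fun i => ?_⟩
    simp only [hΦ, Matrix.mulVec, dotProduct]
    exact HasDerivAt.fun_sum fun j _ =>
      ((hAhol i j).differentiableAt hUl).hasDerivAt.mul_const (v j)
  have hpen := two_mul_pencil Minf hMsymm (fun t => Φ x y t) p' l (v ⬝ᵥ (M0 *ᵥ v)) hdl (by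
    filter_upwards [hUl] with t ht
    simp only [hΦ]
    exact hform t ht v v)
  obtain ⟨w, hw⟩ : ∃ w, A l *ᵥ w = p' :=
    ⟨(A l)⁻¹ *ᵥ p', by rw [Matrix.mulVec_mulVec, Matrix.mul_nonsing_inv _ (hAinv l hl),
      Matrix.one_mulVec]⟩
  have hpw : Φ x y l ⬝ᵥ ((M0 - l • Minf) *ᵥ p') = v ⬝ᵥ (M0 *ᵥ w) := by
    rw [hΦ, ← hw, hform l hl]
  have hcols : (Matrix.of fun i j => ![(A l *ᵥ ![1, 0, y, 0]) i, (A l *ᵥ ![0, 1, x, 0]) i, p' i,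
        Φ x y l i] j) = A l * (Matrix.of fun i j =>
        ![(![1, 0, y, 0] : Fin 4 → ℂ) i, (![0, 1, x, 0] : Fin 4 → ℂ) i, w i, v i] j) := by
    rw [← hw, hΦ]
    ext i j
    fin_cases j <;> simp [Matrix.mul_apply, Matrix.mulVec, dotProduct, hv]
  have hjac := det_chart (Φ x y l) (A l *ᵥ ![1, 0, y, 0]) (A l *ᵥ ![0, 1, x, 0]) p' h3
  rw [hcols, Matrix.det_mul, hv, det_tangent, ← hv, ← hpw] at hjac
  have hdet : ∀ i : Fin 3,
      deriv (fun t => Φ t y l i.castSucc / Φ t y l 3) x = _ ∧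
      deriv (fun t => Φ x t l i.castSucc / Φ x t l 3) y = _ ∧
      deriv (fun t => Φ x y t i.castSucc / Φ x y t 3) l = _ := fun i =>
    ⟨((hdx i.castSucc).fun_div (hdx 3) h3).deriv, ((hdy i.castSucc).fun_div (hdy 3) h3).deriv,
      ((hdl i.castSucc).fun_div (hdl 3) h3).deriv⟩
  simp only [fun i => (hdet i).1, fun i => (hdet i).2.1, fun i => (hdet i).2.2]
  rw [hjac]
  linear_combination (-(1 / 2) * (A l).det * ((Φ x y l 3)⁻¹) ^ 4) * hpen
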